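/- arXiv:1509.00850 — 10 statements merged into one kernel-verified Lean document; each statement's English description precedes it below -/
import Mathlib

section
/- Let p, q ∈ ℂ with p + q ≠ 0, let s ∈ ℂ satisfy s² = 1 + 4p + 4q with s ≠ 1, and set w̄₁ = (−1 − s)/(2(p+q)). If |4p/(−1+s)²| + |4q/(−1+s)²| < 1, then the equilibrium w̄₁ of the difference equation w_{n+1} = 1/(1 + p w_n + q w_{n-1}) is locally asymptotically stable. -/
/-- The orbit of Eq.(6) `w_{n+1} = 1/(1 + p w_n + q w_{n-1})` with initial values
`w_{-1} = a`, `w_0 = b` (indexed so that `orbit6 p q a b 0 = w_{-1}`,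
`orbit6 p q a b 1 = w_0`).  Division is Lean's total division; the solution is
"well defined" when every denominator along the orbit is nonzero. -/
noncomputable def orbit6 (p q a b : ℂ) : ℕ → ℂ
  | 0 => a
  | 1 => b
  | n + 2 => 1 / (1 + p * orbit6 p q a b (n + 1) + q * orbit6 p q a b n)

/-- Local asymptotic stability of an equilibrium `e` of Eq.(6): (i) for every `ε > 0`
there is `δ > 0` so that every solution whose initial values satisfy
`|w_0 - e| + |w_{-1} - e| < δ` is well defined (all denominators nonzero) and satisfies
`|w_n - e| < ε` for all `n ≥ -1`; (ii) there is `γ > 0` so that every solution whose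
initial values satisfy `|w_0 - e| + |w_{-1} - e| < γ` converges to `e`. -/
def LocAsympStable6 (p q e : ℂ) : Prop :=
  (∀ ε > (0 : ℝ), ∃ δ > (0 : ℝ), ∀ a b : ℂ, ‖b - e‖ + ‖a - e‖ < δ →
    (∀ n : ℕ, 1 + p * orbit6 p q a b (n + 1) + q * orbit6 p q a b n ≠ 0) ∧
    (∀ n : ℕ, ‖orbit6 p q a b n - e‖ < ε)) ∧
  (∃ γ > (0 : ℝ), ∀ a b : ℂ, ‖b - e‖ + ‖a - e‖ < γ →
    Filter.Tendsto (orbit6 p q a b) Filter.atTop (nhds e))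

lemma eq6_contract (p q e d : ℂ) (hed : e * d = 1) (hd : 1 + p * e + q * e = d)
    (hK : (‖p‖ + ‖q‖) * ‖e‖ < ‖d‖) :
    ∃ r > (0 : ℝ), ∃ ρ : ℝ, 0 ≤ ρ ∧ ρ < 1 ∧ ∀ x y : ℂ, ∀ t : ℝ, ‖x - e‖ ≤ t → ‖y - e‖ ≤ t →
      t ≤ r → 1 + p * x + q * y ≠ 0 ∧ ‖1 / (1 + p * x + q * y) - e‖ ≤ ρ * t := by
  set K := ‖p‖ + ‖q‖ with hKdef
  have hK0 : 0 ≤ K := by positivity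
  have he0 : 0 ≤ K * ‖e‖ := by positivity
  obtain ⟨r, hr, hKr⟩ : ∃ r > (0 : ℝ), K * ‖e‖ + K * r < ‖d‖ := by
    refine ⟨(‖d‖ - K * ‖e‖) / (2 * (K + 1)), by apply div_pos <;> linarith, ?_⟩
    have : K * ((‖d‖ - K * ‖e‖) / (2 * (K + 1))) ≤ (‖d‖ - K * ‖e‖) / 2 := by
      rw [← mul_div_assoc, div_le_div_iff₀ (by positivity) (by positivity)]
      nlinarith
    linarith
  have hpos : 0 < ‖d‖ - K * r := by linarith
  refine ⟨r, hr, K * ‖e‖ / (‖d‖ - K * r), by positivity, ?_, ?_⟩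
  · rw [div_lt_one hpos]; linarith
  intro x y t hx hy ht
  have hnum : ‖p * (x - e) + q * (y - e)‖ ≤ K * t := by
    calc _ ≤ ‖p * (x - e)‖ + ‖q * (y - e)‖ := norm_add_le _ _
      _ = ‖p‖ * ‖x - e‖ + ‖q‖ * ‖y - e‖ := by rw [norm_mul, norm_mul]
      _ ≤ ‖p‖ * t + ‖q‖ * t := by gcongr
      _ = K * t := by rw [hKdef]; ring
  have hKt : K * t ≤ K * r := by gcongr
  have hD : 1 + p * x + q * y = d + (p * (x - e) + q * (y - e)) := by rw [← hd]; ring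
  have hlow : ‖d‖ - K * r ≤ ‖1 + p * x + q * y‖ := by
    rw [hD]
    have := norm_sub_le_norm_add d (p * (x - e) + q * (y - e))
    linarith
  have hne : 1 + p * x + q * y ≠ 0 := by
    rw [← norm_pos_iff]; linarith
  refine ⟨hne, ?_⟩
  have heq : 1 / (1 + p * x + q * y) - e
      = -(e * (p * (x - e) + q * (y - e))) / (1 + p * x + q * y) := by
    rw [eq_div_iff hne, sub_mul, one_div, inv_mul_cancel₀ hne, hD]
    linear_combination -hed
  rw [heq, norm_div, norm_neg, norm_mul]
  calc _ ≤ ‖e‖ * (K * t) / (‖d‖ - K * r) := by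
        have : 0 ≤ K * t := (norm_nonneg _).trans hnum
        gcongr
    _ = _ := by ring

lemma eq6_decay (p q e : ℂ) (r ρ : ℝ) (h0 : 0 ≤ ρ) (h1 : ρ < 1)
    (H : ∀ x y : ℂ, ∀ t : ℝ, ‖x - e‖ ≤ t → ‖y - e‖ ≤ t →
      t ≤ r → 1 + p * x + q * y ≠ 0 ∧ ‖1 / (1 + p * x + q * y) - e‖ ≤ ρ * t)
    (a b : ℂ) (m : ℝ) (ha : ‖a - e‖ ≤ m) (hb : ‖b - e‖ ≤ m) (hm : m ≤ r) (n : ℕ) :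
    ‖orbit6 p q a b n - e‖ ≤ m * ρ ^ (n / 2) ∧
    1 + p * orbit6 p q a b (n + 1) + q * orbit6 p q a b n ≠ 0 := by
  have m0 : 0 ≤ m := (norm_nonneg _).trans ha
  have step : ∀ n, ‖orbit6 p q a b n - e‖ ≤ m * ρ ^ (n / 2) →
      ‖orbit6 p q a b (n + 1) - e‖ ≤ m * ρ ^ ((n + 1) / 2) →
      1 + p * orbit6 p q a b (n + 1) + q * orbit6 p q a b n ≠ 0 ∧
      ‖orbit6 p q a b (n + 2) - e‖ ≤ m * ρ ^ ((n + 2) / 2) := by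
    intro n hn hn1
    have hle : m * ρ ^ ((n + 1) / 2) ≤ m * ρ ^ (n / 2) :=
      mul_le_mul_of_nonneg_left (pow_le_pow_of_le_one h0 h1.le (by omega)) m0
    have hle' : m * ρ ^ (n / 2) ≤ r :=
      (mul_le_of_le_one_right m0 (pow_le_one₀ h0 h1.le)).trans hm
    obtain ⟨A, B⟩ := H _ _ _ (hn1.trans hle) hn hle'
    refine ⟨A, ?_⟩
    have e2 : (n + 2) / 2 = n / 2 + 1 := by omega
    rw [e2, orbit6, pow_succ]
    linarith
  have main : ∀ n, ‖orbit6 p q a b n - e‖ ≤ m * ρ ^ (n / 2) ∧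
      ‖orbit6 p q a b (n + 1) - e‖ ≤ m * ρ ^ ((n + 1) / 2) := by
    intro n
    induction n with
    | zero => simpa [orbit6] using ⟨ha, hb⟩
    | succ k ih => exact ⟨ih.2, (step k ih.1 ih.2).2⟩
  exact ⟨(main n).1, (step n (main n).1 (main n).2).1⟩

/-- if `s² = 1 + 4p + 4q`, `s ≠ 1`, and
`|4p/(-1+s)²| + |4q/(-1+s)²| < 1`, then the equilibrium `w̄₁ = (-1-s)/(2(p+q))` of
`w_{n+1} = 1/(1 + p w_n + q w_{n-1})` is locally asymptotically stable. -/
theorem eq6_equilibrium_one_LAS (p q s : ℂ) (hpq : p + q ≠ 0)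
    (hs : s ^ 2 = 1 + 4 * p + 4 * q) (hs1 : s ≠ 1)
    (h : ‖4 * p / (-1 + s) ^ 2‖ + ‖4 * q / (-1 + s) ^ 2‖ < 1) :
    LocAsympStable6 p q ((-1 - s) / (2 * (p + q))) := by
  have hs1' : -1 + s ≠ 0 := fun h0 => hs1 (by linear_combination h0)
  have hsm : 1 + s ≠ 0 := by
    intro h0
    apply hpq
    linear_combination (1 / 4 : ℂ) * (s - 1) * h0 - (1 / 4 : ℂ) * hs
  have hE : (-1 - s) / (2 * (p + q)) = -2 / (-1 + s) := by
    rw [div_eq_div_iff (mul_ne_zero two_ne_zero hpq) hs1']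
    linear_combination -hs
  rw [hE]
  have hed : -2 / (-1 + s) * (-(-1 + s) / 2) = 1 := by field_simp
  have hd : 1 + p * (-2 / (-1 + s)) + q * (-2 / (-1 + s)) = -(-1 + s) / 2 := by
    field_simp
    linear_combination hs
  have hK : (‖p‖ + ‖q‖) * ‖-2 / (-1 + s)‖ < ‖-(-1 + s) / 2‖ := by
    have hp : 0 < ‖-1 + s‖ := norm_pos_iff.2 hs1'
    simp only [norm_div, norm_mul, norm_pow, norm_neg, Complex.norm_ofNat] at h ⊢
    rw [← add_div, div_lt_one (by positivity)] at h
    rw [← mul_div_assoc, div_lt_div_iff₀ hp two_pos]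
    nlinarith
  generalize -2 / (-1 + s) = e at *
  obtain ⟨r, hr, ρ, h0, h1, H⟩ := eq6_contract p q e _ hed hd hK
  refine ⟨fun ε hε => ⟨min r ε, lt_min hr hε, fun a b hab => ?_⟩, r, hr, fun a b hab => ?_⟩
  · have D := eq6_decay p q e r ρ h0 h1 H a b (‖b - e‖ + ‖a - e‖)
      (by linarith [norm_nonneg (b - e)]) (by linarith [norm_nonneg (a - e)])
      (hab.le.trans (min_le_left _ _))
    refine ⟨fun n => (D n).2, fun n => ?_⟩
    calc _ ≤ _ := (D n).1
      _ ≤ ‖b - e‖ + ‖a - e‖ := mul_le_of_le_one_right (by positivity) (pow_le_one₀ h0 h1.le)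
      _ < ε := hab.trans_le (min_le_right _ _)
  · have D := eq6_decay p q e r ρ h0 h1 H a b (‖b - e‖ + ‖a - e‖)
      (by linarith [norm_nonneg (b - e)]) (by linarith [norm_nonneg (a - e)]) hab.le
    rw [tendsto_iff_norm_sub_tendsto_zero]
    refine squeeze_zero (fun n => norm_nonneg _) (fun n => (D n).1) ?_
    have := ((tendsto_pow_atTop_nhds_zero_of_lt_one h0 h1).comp
      (Nat.tendsto_div_const_atTop (two_ne_zero))).const_mul (‖b - e‖ + ‖a - e‖)
    simpa using this
end

section
/- Let p, q ∈ ℂ with p + q ≠ 0, let s ∈ ℂ satisfy s² = 1 + 4p + 4q with s ≠ −1, and set w̄₂ = (−1 + s)/(2(p+q)). If |4p/(1+s)²| + |4q/(1+s)²| < 1, then the equilibrium w̄₂ of the difference equation w_{n+1} = 1/(1 + p w_n + q w_{n-1}) is locally asymptotically stable. -/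
theorem eq6_step (p q e D0 x y : ℂ) (k r B : ℝ) (hD0 : D0 = 1 + (p + q) * e) (hd : D0 ≠ 0)
    (he : e = 1 / D0) (hpos : 0 < ‖D0‖ - (‖p‖ + ‖q‖) * r)
    (hk : (‖p‖ + ‖q‖) / ‖D0‖ ≤ k * (‖D0‖ - (‖p‖ + ‖q‖) * r)) (hk0 : 0 ≤ k)
    (hx : ‖x - e‖ ≤ B) (hy : ‖y - e‖ ≤ B) (hB : B ≤ r) :
    1 + p * x + q * y ≠ 0 ∧ ‖1 / (1 + p * x + q * y) - e‖ ≤ k * B := by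
  have hB0 : 0 ≤ B := (norm_nonneg _).trans hx
  have hd' : 0 < ‖D0‖ := norm_pos_iff.mpr hd
  set D := 1 + p * x + q * y with hD
  have hlin : D0 - D = -(p * (x - e) + q * (y - e)) := by rw [hD0, hD]; ring
  have h1 : ‖D0 - D‖ ≤ (‖p‖ + ‖q‖) * B := by
    rw [hlin, norm_neg]
    calc ‖p * (x - e) + q * (y - e)‖ ≤ ‖p * (x - e)‖ + ‖q * (y - e)‖ := norm_add_le _ _
      _ = ‖p‖ * ‖x - e‖ + ‖q‖ * ‖y - e‖ := by rw [norm_mul, norm_mul]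
      _ ≤ ‖p‖ * B + ‖q‖ * B := by gcongr
      _ = _ := by ring
  have h2 : (‖p‖ + ‖q‖) * B ≤ (‖p‖ + ‖q‖) * r := by gcongr
  have h3 : ‖D0‖ - (‖p‖ + ‖q‖) * r ≤ ‖D‖ := by
    have := norm_sub_norm_le D0 D
    linarith
  have h4 : 0 < ‖D‖ := lt_of_lt_of_le hpos h3
  have h5 : D ≠ 0 := norm_pos_iff.mp h4
  refine ⟨h5, ?_⟩
  have h6 : 1 / D - e = (D0 - D) / (D * D0) := by rw [he]; field_simp
  rw [h6, norm_div, norm_mul, div_le_iff₀ (by positivity)]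
  have h7 : (‖p‖ + ‖q‖) ≤ k * ‖D‖ * ‖D0‖ := by
    rw [← div_le_iff₀ hd']
    exact hk.trans (by gcongr)
  calc ‖D0 - D‖ ≤ (‖p‖ + ‖q‖) * B := h1
    _ ≤ (k * ‖D‖ * ‖D0‖) * B := by gcongr
    _ = _ := by ring

/-- if `s² = 1 + 4p + 4q`, `s ≠ -1`, and
`|4p/(1+s)²| + |4q/(1+s)²| < 1`, then the equilibrium `w̄₂ = (-1+s)/(2(p+q))` of
`w_{n+1} = 1/(1 + p w_n + q w_{n-1})` is locally asymptotically stable. -/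
theorem eq6_equilibrium_two_LAS (p q s : ℂ) (hpq : p + q ≠ 0)
    (hs : s ^ 2 = 1 + 4 * p + 4 * q) (hs1 : s ≠ -1)
    (h : ‖4 * p / (1 + s) ^ 2‖ + ‖4 * q / (1 + s) ^ 2‖ < 1) :
    LocAsympStable6 p q ((-1 + s) / (2 * (p + q))) := by
  have h1s : 1 + s ≠ 0 := fun h0 => hs1 (by linear_combination h0)
  set e : ℂ := (-1 + s) / (2 * (p + q)) with hedef
  obtain ⟨D0, hD0⟩ : ∃ D0 : ℂ, D0 = (1 + s) / 2 := ⟨_, rfl⟩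
  have hd : D0 ≠ 0 := by rw [hD0]; exact div_ne_zero h1s two_ne_zero
  have hD0e : D0 = 1 + (p + q) * e := by
    rw [hD0, hedef]; field_simp; ring
  have he : e = 1 / D0 := by
    rw [hD0, hedef]; field_simp; linear_combination hs
  have hd' : 0 < ‖D0‖ := norm_pos_iff.mpr hd
  have hA : 0 < ‖p‖ + ‖q‖ := (norm_pos_iff.mpr hpq).trans_le (norm_add_le _ _)
  have hAd : (‖p‖ + ‖q‖) / ‖D0‖ ^ 2 < 1 := by
    have e1 : 4 * p / (1 + s) ^ 2 = p / D0 ^ 2 := by rw [hD0]; field_simp; ring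
    have e2 : 4 * q / (1 + s) ^ 2 = q / D0 ^ 2 := by rw [hD0]; field_simp; ring
    rw [e1, e2, norm_div, norm_div, norm_pow, ← add_div] at h
    exact h
  obtain ⟨k, hk1, hk2⟩ := exists_between hAd
  have hk0 : 0 < k := lt_trans (by positivity) hk1
  obtain ⟨r, hr⟩ : ∃ r : ℝ, r = (‖D0‖ - (‖p‖ + ‖q‖) / (‖D0‖ * k)) / (‖p‖ + ‖q‖) := ⟨_, rfl⟩
  have hAr : ‖D0‖ - (‖p‖ + ‖q‖) * r = (‖p‖ + ‖q‖) / (‖D0‖ * k) := by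
    rw [hr]; field_simp; ring
  have hr0 : 0 < r := by
    rw [hr]
    apply div_pos _ hA
    rw [sub_pos, div_lt_iff₀ (by positivity)]
    rw [div_lt_iff₀ (by positivity)] at hk1
    nlinarith
  have hpos : 0 < ‖D0‖ - (‖p‖ + ‖q‖) * r := by rw [hAr]; positivity
  have hk : (‖p‖ + ‖q‖) / ‖D0‖ ≤ k * (‖D0‖ - (‖p‖ + ‖q‖) * r) := by
    rw [hAr]; apply le_of_eq; field_simp
  have step := fun x y B => eq6_step p q e D0 x y k r B hD0e hd he hpos hk hk0.le
  have key : ∀ a b : ℂ, ‖b - e‖ + ‖a - e‖ < r → ∀ n : ℕ,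
      ‖orbit6 p q a b n - e‖ ≤ (‖b - e‖ + ‖a - e‖) * k ^ (n / 2) ∧
      ‖orbit6 p q a b (n + 1) - e‖ ≤ (‖b - e‖ + ‖a - e‖) * k ^ (n / 2) := by
    intro a b hM n
    have hM0 : 0 ≤ ‖b - e‖ + ‖a - e‖ := by positivity
    have main : ∀ n : ℕ, ‖orbit6 p q a b n - e‖ ≤ (‖b - e‖ + ‖a - e‖) * k ^ (n / 2) := by
      intro n
      induction n using Nat.strong_induction_on with
      | _ n ih =>
        match n, ih with
        | 0, _ => simp [orbit6]
        | 1, _ => simp [orbit6]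
        | n + 2, ih =>
          have i0 := ih n (by omega)
          have i1 := ih (n + 1) (by omega)
          have i1' : ‖orbit6 p q a b (n + 1) - e‖ ≤ (‖b - e‖ + ‖a - e‖) * k ^ (n / 2) :=
            i1.trans (mul_le_mul_of_nonneg_left
              (pow_le_pow_of_le_one hk0.le hk2.le (by omega)) hM0)
          have hB : (‖b - e‖ + ‖a - e‖) * k ^ (n / 2) ≤ r :=
            (mul_le_of_le_one_right hM0 (pow_le_one₀ hk0.le hk2.le)).trans hM.le
          have := (step _ _ _ i1' i0 hB).2
          have h2 : (n + 2) / 2 = n / 2 + 1 := by omega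
          rw [h2, pow_succ, orbit6]
          exact this.trans (le_of_eq (by ring))
    exact ⟨main n, (main (n + 1)).trans (mul_le_mul_of_nonneg_left
              (pow_le_pow_of_le_one hk0.le hk2.le (by omega)) hM0)⟩
  refine ⟨fun ε hε => ⟨min ε r, lt_min hε hr0, fun a b hab => ?_⟩, r, hr0, fun a b hab => ?_⟩
  · have hM0 : 0 ≤ ‖b - e‖ + ‖a - e‖ := by positivity
    have hle : ∀ n : ℕ, (‖b - e‖ + ‖a - e‖) * k ^ (n / 2) ≤ ‖b - e‖ + ‖a - e‖ := fun n =>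
      mul_le_of_le_one_right hM0 (pow_le_one₀ hk0.le hk2.le)
    have hr' := hab.trans_le (min_le_right _ _)
    have hε' := hab.trans_le (min_le_left _ _)
    exact ⟨fun n => (step _ _ _ (key a b hr' n).2 (key a b hr' n).1 ((hle n).trans hr'.le)).1,
      fun n => ((key a b hr' n).1.trans (hle n)).trans_lt hε'⟩
  · rw [tendsto_iff_norm_sub_tendsto_zero]
    have ht : Filter.Tendsto (fun n : ℕ => (‖b - e‖ + ‖a - e‖) * k ^ (n / 2))
        Filter.atTop (nhds 0) := by
      have := ((tendsto_pow_atTop_nhds_zero_of_lt_one hk0.le hk2).comp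
        (Nat.tendsto_div_const_atTop (two_ne_zero))).const_mul (‖b - e‖ + ‖a - e‖)
      simpa using this
    exact squeeze_zero (fun _ => norm_nonneg _) (fun n => (key a b hab n).1) ht
end

section
/- Let p, q ∈ ℂ with |p| > 1. Then the zero equilibrium of the difference equation w_{n+1} = w_{n-1}/(p + q w_n + w_{n-1}) is locally asymptotically stable. -/
/-- The orbit of Eq.(8) `w_{n+1} = w_{n-1}/(p + q w_n + w_{n-1})` with initial values
`w_{-1} = a`, `w_0 = b` (indexed so that `orbit8 p q a b 0 = w_{-1}`,
`orbit8 p q a b 1 = w_0`).  Division is Lean's total division; the solution is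
"well defined" when every denominator along the orbit is nonzero. -/
noncomputable def orbit8 (p q a b : ℂ) : ℕ → ℂ
  | 0 => a
  | 1 => b
  | n + 2 => orbit8 p q a b n / (p + q * orbit8 p q a b (n + 1) + orbit8 p q a b n)

/-- Local asymptotic stability of an equilibrium `e` of Eq.(8): (i) for every `ε > 0`
there is `δ > 0` so that every solution whose initial values satisfy
`|w_0 - e| + |w_{-1} - e| < δ` is well defined (all denominators nonzero) and satisfies
`|w_n - e| < ε` for all `n ≥ -1`; (ii) there is `γ > 0` so that every solution whose
initial values satisfy `|w_0 - e| + |w_{-1} - e| < γ` converges to `e`. -/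
def LocAsympStable8 (p q e : ℂ) : Prop :=
  (∀ ε > (0 : ℝ), ∃ δ > (0 : ℝ), ∀ a b : ℂ, ‖b - e‖ + ‖a - e‖ < δ →
    (∀ n : ℕ, p + q * orbit8 p q a b (n + 1) + orbit8 p q a b n ≠ 0) ∧
    (∀ n : ℕ, ‖orbit8 p q a b n - e‖ < ε)) ∧
  (∃ γ > (0 : ℝ), ∀ a b : ℂ, ‖b - e‖ + ‖a - e‖ < γ →
    Filter.Tendsto (orbit8 p q a b) Filter.atTop (nhds e))

theorem orbit8_aux_den (p q x y : ℂ) (r d : ℝ) (hr : 1 < r)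
    (hd : (‖q‖ + 1) * d ≤ ‖p‖ - r) (hx : ‖x‖ < d) (hy : ‖y‖ < d) :
    r ≤ ‖p + q * y + x‖ := by
  have h1 : ‖p‖ ≤ ‖p + q * y + x‖ + ‖q * y + x‖ := by
    have h := norm_sub_le (p + q * y + x) (q * y + x)
    have e : p + q * y + x - (q * y + x) = p := by ring
    rwa [e] at h
  have h2 : ‖q * y + x‖ ≤ ‖q‖ * ‖y‖ + ‖x‖ := by
    have h := norm_add_le (q * y) x
    rwa [norm_mul] at h
  have h3 : ‖q‖ * ‖y‖ ≤ ‖q‖ * d := mul_le_mul_of_nonneg_left hy.le (norm_nonneg q)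
  linarith

theorem orbit8_aux_bound (p q a b : ℂ) (r d : ℝ) (hr : 1 < r) (hd0 : 0 < d)
    (hd : (‖q‖ + 1) * d ≤ ‖p‖ - r) (ha : ‖a‖ < d) (hb : ‖b‖ < d) (n : ℕ) :
    ‖orbit8 p q a b n‖ < d * r⁻¹ ^ (n / 2) ∧
      ‖orbit8 p q a b (n + 1)‖ < d * r⁻¹ ^ ((n + 1) / 2) := by
  have hr0 : 0 < r := by linarith
  have hle : ∀ k : ℕ, d * r⁻¹ ^ k ≤ d := fun k =>
    mul_le_of_le_one_right hd0.le
      (pow_le_one₀ (inv_nonneg.mpr hr0.le) (inv_le_one_of_one_le₀ hr.le))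
  induction n with
  | zero => simpa [orbit8] using ⟨ha, hb⟩
  | succ n ih =>
    obtain ⟨h1, h2⟩ := ih
    refine ⟨h2, ?_⟩
    have hden := orbit8_aux_den p q _ _ r d hr hd (h1.trans_le (hle _)) (h2.trans_le (hle _))
    have e : (n + 1 + 1) / 2 = n / 2 + 1 := by omega
    rw [e, pow_succ, ← mul_assoc, ← div_eq_mul_inv]
    rw [orbit8, norm_div]
    calc _ ≤ ‖orbit8 p q a b n‖ / r := by gcongr
      _ < _ := by gcongr

theorem orbit8_aux_lt (p q a b : ℂ) (r d : ℝ) (hr : 1 < r) (hd0 : 0 < d)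
    (hd : (‖q‖ + 1) * d ≤ ‖p‖ - r) (ha : ‖a‖ < d) (hb : ‖b‖ < d) (n : ℕ) :
    ‖orbit8 p q a b n‖ < d :=
  (orbit8_aux_bound p q a b r d hr hd0 hd ha hb n).1.trans_le
    (mul_le_of_le_one_right hd0.le
      (pow_le_one₀ (inv_nonneg.mpr (by linarith)) (inv_le_one_of_one_le₀ hr.le)))

/-- if `|p| > 1` then the zero equilibrium of
`w_{n+1} = w_{n-1}/(p + q w_n + w_{n-1})` is locally asymptotically stable. -/
theorem eq8_zero_equilibrium_LAS (p q : ℂ) (hp : 1 < ‖p‖) :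
    LocAsympStable8 p q 0 := by
  obtain ⟨r, hr, hrp⟩ := exists_between hp
  have hq : 0 < ‖q‖ + 1 := by positivity
  have hD : 0 < (‖p‖ - r) / (‖q‖ + 1) := div_pos (by linarith) hq
  have hDle : ∀ d, d ≤ (‖p‖ - r) / (‖q‖ + 1) → (‖q‖ + 1) * d ≤ ‖p‖ - r := by
    intro d h
    rw [le_div_iff₀ hq] at h
    linarith
  refine ⟨fun ε hε => ?_, ?_⟩
  · refine ⟨min ε ((‖p‖ - r) / (‖q‖ + 1)), lt_min hε hD, fun a b hab => ?_⟩
    simp only [sub_zero] at hab ⊢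
    have hd := hDle _ (min_le_right ε ((‖p‖ - r) / (‖q‖ + 1)))
    have hlt := orbit8_aux_lt p q a b r _ hr (lt_min hε hD) hd
      (by linarith [norm_nonneg b]) (by linarith [norm_nonneg a])
    refine ⟨fun n h0 => ?_, fun n => (hlt n).trans_le (min_le_left _ _)⟩
    have h := orbit8_aux_den p q _ _ r _ hr hd (hlt n) (hlt (n + 1))
    rw [h0, norm_zero] at h
    linarith
  · refine ⟨(‖p‖ - r) / (‖q‖ + 1), hD, fun a b hab => ?_⟩
    simp only [sub_zero] at hab
    have hb := orbit8_aux_bound p q a b r _ hr hD (hDle _ le_rfl)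
      (by linarith [norm_nonneg b]) (by linarith [norm_nonneg a])
    refine squeeze_zero_norm (fun n => (hb n).1.le) ?_
    have h1 : Filter.Tendsto (fun n : ℕ => n / 2) Filter.atTop Filter.atTop :=
      Nat.tendsto_div_const_atTop (by norm_num)
    have h2 := (tendsto_pow_atTop_nhds_zero_of_lt_one (inv_nonneg.mpr (by linarith))
      (inv_lt_one_of_one_lt₀ hr)).comp h1
    simpa using h2.const_mul ((‖p‖ - r) / (‖q‖ + 1))
end

section
/- Let p, q ∈ ℂ with 0 < |p| < 1. Then the zero equilibrium of the difference equation w_{n+1} = w_{n-1}/(p + q w_n + w_{n-1}) is a repeller: there exists r > 0 such that for every solution (w_n) of the equation (well defined for all n) with 0 < |w_0| + |w_{-1}| < r, there exists n ≥ 0 with |w_n| ≥ r. -/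
/-- if `0 < |p| < 1` then the zero equilibrium of
`w_{n+1} = w_{n-1}/(p + q w_n + w_{n-1})` is a repeller: there is `r > 0` such that
every well-defined solution with `0 < |w_0| + |w_{-1}| < r` has `|w_n| ≥ r` for some
`n ≥ 0`.  Sequences are indexed by `ℕ` with `w 0 = w_{-1}`, `w 1 = w_0`. -/
theorem eq8_zero_equilibrium_repeller (p q : ℂ) (hp0 : 0 < ‖p‖) (hp1 : ‖p‖ < 1) :
    ∃ r > (0 : ℝ), ∀ w : ℕ → ℂ,
      (∀ n : ℕ, p + q * w (n + 1) + w n ≠ 0) →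
      (∀ n : ℕ, w (n + 2) = w n / (p + q * w (n + 1) + w n)) →
      0 < ‖w 1‖ + ‖w 0‖ → ‖w 1‖ + ‖w 0‖ < r →
      ∃ n : ℕ, r ≤ ‖w (n + 1)‖ := by
  have hQ : 0 < ‖q‖ + 1 := by positivity
  refine ⟨(1 - ‖p‖) / (2 * (‖q‖ + 1)), div_pos (by linarith) (by positivity), ?_⟩
  intro w hne hrec hpos hlt
  by_contra! hcon
  set r := (1 - ‖p‖) / (2 * (‖q‖ + 1)) with hr
  have hrQ : (‖q‖ + 1) * r = (1 - ‖p‖) / 2 := by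
    rw [hr]; field_simp
  have hall : ∀ n, ‖w n‖ < r := by
    intro n
    cases n with
    | zero => linarith [norm_nonneg (w 1)]
    | succ k => exact hcon k
  set c := (1 + ‖p‖) / 2 with hc
  have hc0 : 0 ≤ c := by rw [hc]; positivity
  have hc1 : c < 1 := by rw [hc]; linarith
  have hstep : ∀ n, ‖w n‖ ≤ c * ‖w (n + 2)‖ := by
    intro n
    have h1 : w n = (p + q * w (n + 1) + w n) * w (n + 2) := by
      rw [hrec n, mul_div_cancel₀ _ (hne n)]
    have h2 : ‖p + q * w (n + 1) + w n‖ ≤ c := by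
      have h3 : ‖p + q * w (n + 1) + w n‖ ≤ ‖p‖ + ‖q‖ * ‖w (n + 1)‖ + ‖w n‖ := by
        rw [← norm_mul]; exact norm_add₃_le
      have h4 : ‖q‖ * ‖w (n + 1)‖ ≤ ‖q‖ * r :=
        mul_le_mul_of_nonneg_left (hall _).le (norm_nonneg _)
      have h5 := hall n
      rw [hc]; linarith
    calc ‖w n‖ = ‖p + q * w (n + 1) + w n‖ * ‖w (n + 2)‖ := by
          rw [← norm_mul, ← h1]
      _ ≤ c * ‖w (n + 2)‖ := mul_le_mul_of_nonneg_right h2 (norm_nonneg _)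
  have hpow : ∀ k n, ‖w n‖ ≤ c ^ k * r := by
    intro k
    induction k with
    | zero => intro n; simpa using (hall n).le
    | succ k ih =>
      intro n
      calc ‖w n‖ ≤ c * ‖w (n + 2)‖ := hstep n
        _ ≤ c * (c ^ k * r) := mul_le_mul_of_nonneg_left (ih _) hc0
        _ = c ^ (k + 1) * r := by ring
  have hlim : Filter.Tendsto (fun k : ℕ => c ^ k * r) Filter.atTop (nhds 0) := by
    simpa using (tendsto_pow_atTop_nhds_zero_of_lt_one hc0 hc1).mul_const r
  have hz : ∀ n, ‖w n‖ ≤ 0 := fun n => ge_of_tendsto' hlim (fun k => hpow k n)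
  linarith [hz 0, hz 1]
end

section
/- Let p, q ∈ ℂ with q ≠ −1 and set w̄ = (1−p)/(1+q). The linearization of the difference equation w_{n+1} = w_{n-1}/(p + q w_n + w_{n-1}) at the equilibrium w̄ has coefficients a₀ = −q(1−p)/(1+q) (coefficient of w_n) and a₁ = (p+q)/(1+q) (coefficient of w_{n-1}); consequently, if |q(1−p)| + |p+q| < |1+q| then the equilibrium w̄ is locally asymptotically stable. -/
/-- One step of the contraction estimate. -/
lemma step8 (p q e : ℂ) (he : p + q * e + e = 1) (c m : ℝ)
    (hS : ‖q * e‖ + ‖1 - e‖ ≤ c) (hc1 : c < 1) (x y : ℂ)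
    (hm : (‖q‖ + 1) * m ≤ c - (‖q * e‖ + ‖1 - e‖))
    (hx : ‖x - e‖ ≤ m) (hy : ‖y - e‖ ≤ m) :
    p + q * x + y ≠ 0 ∧ ‖y / (p + q * x + y) - e‖ ≤ c * m := by
  have hm0 : 0 ≤ m := (norm_nonneg _).trans hx
  have hA := norm_nonneg (q * e)
  have hB := norm_nonneg (1 - e)
  set A := ‖q * e‖ with hAd
  set B := ‖1 - e‖ with hBd
  have hD : p + q * x + y = 1 - (-(q * (x - e) + (y - e))) := by linear_combination he
  have hN : ‖q * (x - e) + (y - e)‖ ≤ (‖q‖ + 1) * m := by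
    calc _ ≤ ‖q * (x - e)‖ + ‖y - e‖ := norm_add_le _ _
      _ ≤ ‖q‖ * m + m := by rw [norm_mul]; gcongr
      _ = _ := by ring
  have hDn : 1 - (c - (A + B)) ≤ ‖p + q * x + y‖ := by
    have h := norm_sub_norm_le (1 : ℂ) (-(q * (x - e) + (y - e)))
    rw [← hD, norm_neg, norm_one] at h
    linarith
  have hpos : 0 < ‖p + q * x + y‖ := by linarith
  have hne : p + q * x + y ≠ 0 := norm_pos_iff.mp hpos
  refine ⟨hne, ?_⟩
  have heq : y / (p + q * x + y) - e
      = (-(q * e) * (x - e) + (1 - e) * (y - e)) / (p + q * x + y) := by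
    rw [eq_div_iff hne, sub_mul, div_mul_cancel₀ _ hne]
    linear_combination (-e) * he
  rw [heq, norm_div, div_le_iff₀ hpos]
  calc ‖-(q * e) * (x - e) + (1 - e) * (y - e)‖
      ≤ ‖-(q * e) * (x - e)‖ + ‖(1 - e) * (y - e)‖ := norm_add_le _ _
    _ ≤ A * m + B * m := by
        rw [norm_mul, norm_mul, norm_neg]; gcongr
    _ = (A + B) * m := by ring
    _ ≤ (c * (1 - (c - (A + B)))) * m := by
        gcongr
        nlinarith [mul_nonneg (sub_nonneg.2 hS) (sub_nonneg.2 hc1.le)]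
    _ ≤ (c * ‖p + q * x + y‖) * m := by
        have : 0 ≤ c := by linarith
        gcongr
    _ = _ := by ring

lemma bound8 (p q e : ℂ) (he : p + q * e + e = 1) (c m : ℝ)
    (hS : ‖q * e‖ + ‖1 - e‖ ≤ c) (hc1 : c < 1) (a b : ℂ)
    (hm : (‖q‖ + 1) * m ≤ c - (‖q * e‖ + ‖1 - e‖))
    (ha : ‖a - e‖ ≤ m) (hb : ‖b - e‖ ≤ m) (n : ℕ) :
    ‖orbit8 p q a b n - e‖ ≤ c ^ (n / 2) * m ∧
    ‖orbit8 p q a b (n + 1) - e‖ ≤ c ^ (n / 2) * m ∧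
    ‖orbit8 p q a b (n + 1) - e‖ ≤ c ^ ((n + 1) / 2) * m ∧
    p + q * orbit8 p q a b (n + 1) + orbit8 p q a b n ≠ 0 := by
  have hm0 : 0 ≤ m := (norm_nonneg _).trans ha
  have hc0 : 0 ≤ c := by linarith [norm_nonneg (q * e), norm_nonneg (1 - e)]
  have key : ∀ n : ℕ, ‖orbit8 p q a b n - e‖ ≤ c ^ (n / 2) * m ∧
      ‖orbit8 p q a b (n + 1) - e‖ ≤ c ^ ((n + 1) / 2) * m →
      ‖orbit8 p q a b (n + 1) - e‖ ≤ c ^ (n / 2) * m ∧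
      p + q * orbit8 p q a b (n + 1) + orbit8 p q a b n ≠ 0 ∧
      ‖orbit8 p q a b (n + 2) - e‖ ≤ c ^ ((n + 2) / 2) * m := by
    intro n ⟨h1, h2⟩
    have h3 : ‖orbit8 p q a b (n + 1) - e‖ ≤ c ^ (n / 2) * m := by
      refine h2.trans ?_
      exact mul_le_mul_of_nonneg_right
        (pow_le_pow_of_le_one hc0 hc1.le (by omega)) hm0
    have hle : c ^ (n / 2) * m ≤ m := mul_le_of_le_one_left hm0 (pow_le_one₀ hc0 hc1.le)
    have hs := step8 p q e he c (c ^ (n / 2) * m) hS hc1 _ _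
      (le_trans (by gcongr) hm) h3 h1
    refine ⟨h3, hs.1, ?_⟩
    have : (n + 2) / 2 = n / 2 + 1 := by omega
    rw [this, pow_succ']
    rw [mul_assoc]
    simpa only [orbit8] using hs.2
  have all : ∀ n : ℕ, ‖orbit8 p q a b n - e‖ ≤ c ^ (n / 2) * m ∧
      ‖orbit8 p q a b (n + 1) - e‖ ≤ c ^ ((n + 1) / 2) * m := by
    intro n
    induction n with
    | zero => simpa [orbit8] using ⟨ha, hb⟩
    | succ k ih => exact ⟨ih.2, (key k ih).2.2⟩
  exact ⟨(all n).1, (key n (all n)).1, (all n).2, (key n (all n)).2.1⟩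

lemma las8 (p q e : ℂ) (he : p + q * e + e = 1) (hS : ‖q * e‖ + ‖1 - e‖ < 1) :
    LocAsympStable8 p q e := by
  obtain ⟨c, hSc, hc1⟩ := exists_between hS
  have hc0 : 0 ≤ c := by linarith [norm_nonneg (q * e), norm_nonneg (1 - e)]
  have hq1 : 0 < ‖q‖ + 1 := by positivity
  set r : ℝ := (c - (‖q * e‖ + ‖1 - e‖)) / (‖q‖ + 1) with hr
  have hr0 : 0 < r := div_pos (by linarith) hq1
  have main : ∀ m : ℝ, m ≤ r → ∀ a b : ℂ, ‖b - e‖ + ‖a - e‖ < m → ∀ n : ℕ,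
      ‖orbit8 p q a b n - e‖ ≤ c ^ (n / 2) * (‖b - e‖ + ‖a - e‖) ∧
      p + q * orbit8 p q a b (n + 1) + orbit8 p q a b n ≠ 0 := by
    intro m hm a b hab n
    have h := bound8 p q e he c (‖b - e‖ + ‖a - e‖) hSc.le hc1 a b
      (by
        have : ‖b - e‖ + ‖a - e‖ ≤ r := by linarith
        rw [hr, le_div_iff₀ hq1] at this
        linarith)
      (by linarith [norm_nonneg (b - e)]) (by linarith [norm_nonneg (a - e)]) n
    exact ⟨h.1, h.2.2.2⟩
  refine ⟨fun ε hε => ⟨min ε r, lt_min hε hr0, fun a b hab => ?_⟩, r, hr0, fun a b hab => ?_⟩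
  · have h := main _ (min_le_right _ _) a b hab
    refine ⟨fun n => (h n).2, fun n => ?_⟩
    calc _ ≤ _ := (h n).1
      _ ≤ ‖b - e‖ + ‖a - e‖ :=
        mul_le_of_le_one_left (by positivity) (pow_le_one₀ hc0 hc1.le)
      _ < _ := hab.trans_le (min_le_left _ _)
  · have h := main r le_rfl a b hab
    rw [tendsto_iff_norm_sub_tendsto_zero]
    refine squeeze_zero (fun _ => norm_nonneg _) (fun n => (h n).1) ?_
    have h2 := ((tendsto_pow_atTop_nhds_zero_of_lt_one hc0 hc1).comp
      (Nat.tendsto_div_const_atTop (n := 2) (by norm_num))).mul_const (‖b - e‖ + ‖a - e‖)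
    simpa using h2

/-- for `q ≠ -1` and `w̄ = (1-p)/(1+q)`, the linearization of
`w_{n+1} = w_{n-1}/(p + q w_n + w_{n-1})` (with `f(x,y) = y/(p + q x + y)`) at `w̄`
has coefficients `a₀ = ∂f/∂x(w̄,w̄) = -q(1-p)/(1+q)` and
`a₁ = ∂f/∂y(w̄,w̄) = (p+q)/(1+q)`; consequently, if `|q(1-p)| + |p+q| < |1+q|`
then `w̄` is locally asymptotically stable. -/
theorem eq8_nonzero_equilibrium_LAS (p q : ℂ) (hq : q ≠ -1) :
    deriv (fun x : ℂ => ((1 - p) / (1 + q)) / (p + q * x + (1 - p) / (1 + q)))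
        ((1 - p) / (1 + q)) = -q * (1 - p) / (1 + q) ∧
    deriv (fun y : ℂ => y / (p + q * ((1 - p) / (1 + q)) + y))
        ((1 - p) / (1 + q)) = (p + q) / (1 + q) ∧
    (‖q * (1 - p)‖ + ‖p + q‖ < ‖1 + q‖ →
      LocAsympStable8 p q ((1 - p) / (1 + q))) := by
  have hq' : 1 + q ≠ 0 := fun h => hq (by linear_combination h)
  have he : p + q * ((1 - p) / (1 + q)) + (1 - p) / (1 + q) = 1 := by
    field_simp
    ring
  have h1e : 1 - (1 - p) / (1 + q) = (p + q) / (1 + q) := by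
    field_simp
    ring
  have hqe : q * ((1 - p) / (1 + q)) = q * (1 - p) / (1 + q) := by ring
  refine ⟨?_, ?_, fun h => ?_⟩
  · rw [neg_mul, neg_div, ← hqe]
    generalize (1 - p) / (1 + q) = e at *
    have hd : HasDerivAt (fun x : ℂ => p + q * x + e) q e := by
      simpa using (((hasDerivAt_id e).const_mul q).const_add p).add_const e
    have h := (hasDerivAt_const e e).div hd (by rw [he]; exact one_ne_zero)
    refine h.deriv.trans ?_
    rw [he]
    ring
  · rw [← h1e]
    generalize (1 - p) / (1 + q) = e at *
    have hd : HasDerivAt (fun y : ℂ => p + q * e + y) 1 e := by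
      simpa using (hasDerivAt_id e).const_add (p + q * e)
    have h := (hasDerivAt_id e).div hd (by rw [he]; exact one_ne_zero)
    refine h.deriv.trans ?_
    rw [he]
    simp
  · refine las8 p q _ he ?_
    rw [h1e, hqe, norm_div, norm_div, ← add_div, div_lt_one (norm_pos_iff.mpr hq')]
    exact h
end

section
/- Let p, q ∈ ℂ with |p| > 1 and let ε > 0 satisfy ε < (|p| − 1)/(|q| + 1). If u, v ∈ ℂ with |u| < ε and |v| < ε, then p + q u + v ≠ 0 and |v/(p + q u + v)| < ε. Consequently, every solution of w_{n+1} = w_{n-1}/(p + q w_n + w_{n-1}) with initial values w_{-1}, w_0 in the open ball B(0, ε) is well defined and remains in B(0, ε) for all n. -/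
/-- boundedness for Eq.(8): if `|p| > 1` and `0 < ε < (|p|-1)/(|q|+1)`,
then for `u, v` in the open ball `B(0,ε)` the denominator `p + q u + v` is nonzero and
`|v/(p + q u + v)| < ε`; consequently every solution of
`w_{n+1} = w_{n-1}/(p + q w_n + w_{n-1})` with initial values `w_{-1}, w_0 ∈ B(0,ε)`
is well defined and remains in `B(0,ε)` for all `n`.  Sequences are indexed by `ℕ`
with `w 0 = w_{-1}`, `w 1 = w_0`. -/
theorem eq8_boundedness (p q : ℂ) (hp : 1 < ‖p‖) (ε : ℝ) (hε : 0 < ε)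
    (hεb : ε < (‖p‖ - 1) / (‖q‖ + 1)) :
    (∀ u v : ℂ, ‖u‖ < ε → ‖v‖ < ε →
      p + q * u + v ≠ 0 ∧ ‖v / (p + q * u + v)‖ < ε) ∧
    (∀ w : ℕ → ℂ, ‖w 0‖ < ε → ‖w 1‖ < ε →
      (∀ n : ℕ, w (n + 2) = w n / (p + q * w (n + 1) + w n)) →
      (∀ n : ℕ, p + q * w (n + 1) + w n ≠ 0) ∧ (∀ n : ℕ, ‖w n‖ < ε)) := by
  have key : ∀ u v : ℂ, ‖u‖ < ε → ‖v‖ < ε →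
      p + q * u + v ≠ 0 ∧ ‖v / (p + q * u + v)‖ < ε := by
    intro u v hu hv
    have hq : 0 ≤ ‖q‖ := norm_nonneg q
    have h1 : ε * (‖q‖ + 1) < ‖p‖ - 1 := (lt_div_iff₀ (by positivity)).1 hεb
    have h2 : ‖q * u‖ ≤ ‖q‖ * ε := by
      rw [norm_mul]
      exact mul_le_mul_of_nonneg_left hu.le hq
    have h3 : ‖p‖ ≤ ‖p + q * u + v‖ + ‖q * u‖ + ‖v‖ := by
      have e : p = (p + q * u + v) - q * u - v := by ring
      calc ‖p‖ = ‖(p + q * u + v) - q * u - v‖ := by rw [← e]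
        _ ≤ ‖(p + q * u + v) - q * u‖ + ‖v‖ := norm_sub_le _ _
        _ ≤ _ := by gcongr; exact norm_sub_le _ _
    have h4 : 1 < ‖p + q * u + v‖ := by nlinarith
    refine ⟨norm_pos_iff.1 (by linarith), ?_⟩
    rw [norm_div]
    exact (div_le_self (norm_nonneg v) h4.le).trans_lt hv
  refine ⟨key, fun w h0 h1 hw => ?_⟩
  have hb : ∀ n : ℕ, ‖w n‖ < ε ∧ ‖w (n + 1)‖ < ε := by
    intro n
    induction n with
    | zero => exact ⟨h0, h1⟩
    | succ k ih =>
      refine ⟨ih.2, ?_⟩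
      rw [show k + 1 + 1 = k + 2 from rfl, hw k]
      exact (key _ _ ih.2 ih.1).2
  exact ⟨fun n => (key _ _ (hb n).2 (hb n).1).1, fun n => (hb n).1⟩
end

section
/- Let p, q ∈ ℂ with q ≠ 0 and p ≠ q, and let φ, ψ ∈ ℂ. Then φ and ψ satisfy the period-two equations for Eq.(6), namely 1 + p ψ + q φ ≠ 0, 1 + p φ + q ψ ≠ 0, φ(1 + p ψ + q φ) = 1 and ψ(1 + p φ + q ψ) = 1 with φ ≠ ψ, if and only if φ ≠ ψ, φ + ψ = −1/q and φ ψ = 1/(p − q). In particular, the prime period-two solutions ..., φ, ψ, φ, ψ, ... of Eq.(6) are exactly the pairs of distinct roots of t² + t/q + 1/(p−q) = 0. -/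
/-- for `q ≠ 0`, `p ≠ q`, the pair `(φ, ψ)` satisfies the period-two
equations of Eq.(6) `w_{n+1} = 1/(1 + p w_n + q w_{n-1})`, i.e. nonvanishing
denominators, `φ(1 + p ψ + q φ) = 1`, `ψ(1 + p φ + q ψ) = 1` and `φ ≠ ψ`, iff
`φ ≠ ψ`, `φ + ψ = -1/q` and `φ ψ = 1/(p - q)`; i.e. the prime period-two solutions
are exactly the pairs of distinct roots of `t² + t/q + 1/(p-q) = 0`. -/
theorem eq6_period_two (p q : ℂ) (hq : q ≠ 0) (hpq : p ≠ q) (φ ψ : ℂ) :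
    (1 + p * ψ + q * φ ≠ 0 ∧ 1 + p * φ + q * ψ ≠ 0 ∧
      φ * (1 + p * ψ + q * φ) = 1 ∧ ψ * (1 + p * φ + q * ψ) = 1 ∧ φ ≠ ψ) ↔
    (φ ≠ ψ ∧ φ + ψ = -1 / q ∧ φ * ψ = 1 / (p - q)) := by
  have hd : p - q ≠ 0 := sub_ne_zero.mpr hpq
  rw [eq_div_iff hq, eq_div_iff hd]
  constructor
  · rintro ⟨-, -, h1, h2, hne⟩
    have hs : (φ + ψ) * q = -1 := by
      apply mul_left_cancel₀ (sub_ne_zero.mpr hne)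
      linear_combination h1 - h2
    exact ⟨hne, hs, by linear_combination h1 - φ * hs⟩
  · rintro ⟨hne, hs, hm⟩
    have h1 : φ * (1 + p * ψ + q * φ) = 1 := by linear_combination hm + φ * hs
    have h2 : ψ * (1 + p * φ + q * ψ) = 1 := by linear_combination hm + ψ * hs
    exact ⟨right_ne_zero_of_mul_eq_one h1, right_ne_zero_of_mul_eq_one h2, h1, h2, hne⟩
end

section
/- Let p, q ∈ ℂ with q ≠ 0 and p ≠ q, and let φ, ψ ∈ ℂ with φ ≠ ψ. Then φ and ψ satisfy the period-two equations for Eq.(7), namely 1 + p ψ + q φ ≠ 0, 1 + p φ + q ψ ≠ 0, φ(1 + p ψ + q φ) = ψ and ψ(1 + p φ + q ψ) = φ, if and only if φ + ψ = −2/q and φ ψ = −2/(q(p − q)). -/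
/-- for `q ≠ 0`, `p ≠ q` and `φ ≠ ψ`, the pair `(φ, ψ)` satisfies the
period-two equations of Eq.(7) `w_{n+1} = w_n/(1 + p w_n + q w_{n-1})`, i.e.
nonvanishing denominators, `φ(1 + p ψ + q φ) = ψ` and `ψ(1 + p φ + q ψ) = φ`, iff
`φ + ψ = -2/q` and `φ ψ = -2/(q(p - q))`. -/
theorem eq7_period_two (p q : ℂ) (hq : q ≠ 0) (hpq : p ≠ q) (φ ψ : ℂ) (hne : φ ≠ ψ) :
    (1 + p * ψ + q * φ ≠ 0 ∧ 1 + p * φ + q * ψ ≠ 0 ∧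
      φ * (1 + p * ψ + q * φ) = ψ ∧ ψ * (1 + p * φ + q * ψ) = φ) ↔
    (φ + ψ = -2 / q ∧ φ * ψ = -2 / (q * (p - q))) := by
  have hd : p - q ≠ 0 := sub_ne_zero.mpr hpq
  have hs : φ - ψ ≠ 0 := sub_ne_zero.mpr hne
  have hqd : q * (p - q) ≠ 0 := mul_ne_zero hq hd
  rw [eq_div_iff hq, eq_div_iff hqd]
  constructor
  · rintro ⟨-, -, h1, h2⟩
    have hS : (φ + ψ) * q = -2 := by
      apply mul_left_cancel₀ hs
      linear_combination h1 - h2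
    refine ⟨hS, ?_⟩
    have h3 : 2 * (φ * ψ * (q * (p - q))) = 2 * (-2) := by
      linear_combination q * (h1 + h2) - ((φ + ψ) * q - 2) * hS
    exact mul_left_cancel₀ two_ne_zero h3
  · rintro ⟨hS, hP⟩
    have h1 : φ * (1 + p * ψ + q * φ) = ψ := by
      apply mul_left_cancel₀ hq
      linear_combination (q * φ - 1) * hS + hP
    have h2 : ψ * (1 + p * φ + q * ψ) = φ := by
      apply mul_left_cancel₀ hq
      linear_combination (q * ψ - 1) * hS + hP
    refine ⟨?_, ?_, h1, h2⟩
    · intro h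
      rw [h, mul_zero] at h1
      rw [← h1] at hP
      norm_num at hP
    · intro h
      rw [h, mul_zero] at h2
      rw [← h2] at hP
      norm_num at hP
end

section
/- Let p, q ∈ ℂ with q ≠ 1 and p ≠ 1. Suppose φ, ψ ∈ ℂ with φ ≠ ψ satisfy the period-two equations for Eq.(8): p + q ψ + φ ≠ 0, p + q φ + ψ ≠ 0, φ = φ/(p + q ψ + φ) and ψ = ψ/(p + q φ + ψ). Then {φ, ψ} = {0, 1 − p} and p + q(1−p) ≠ 0. Conversely, if p + q(1−p) ≠ 0 then (φ, ψ) = (0, 1−p) satisfies these equations, so the alternating sequence ..., 0, 1−p, 0, 1−p, ... is a prime period-two solution of w_{n+1} = w_{n-1}/(p + q w_n + w_{n-1}). -/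
/-- for `q ≠ 1`, `p ≠ 1`: any `φ ≠ ψ` with nonvanishing denominators
satisfying `φ = φ/(p + q ψ + φ)` and `ψ = ψ/(p + q φ + ψ)` must be (in some order)
`{0, 1-p}`, and then `p + q(1-p) ≠ 0`.  Conversely, if `p + q(1-p) ≠ 0` then
`(φ, ψ) = (0, 1-p)` satisfies these equations, and the alternating sequence
`..., 0, 1-p, 0, 1-p, ...` is a prime period-two solution of
`w_{n+1} = w_{n-1}/(p + q w_n + w_{n-1})`. -/
theorem eq8_period_two (p q : ℂ) (hq : q ≠ 1) (hp : p ≠ 1) :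
    (∀ φ ψ : ℂ, φ ≠ ψ →
      p + q * ψ + φ ≠ 0 → p + q * φ + ψ ≠ 0 →
      φ = φ / (p + q * ψ + φ) → ψ = ψ / (p + q * φ + ψ) →
      ((φ = 0 ∧ ψ = 1 - p) ∨ (φ = 1 - p ∧ ψ = 0)) ∧ p + q * (1 - p) ≠ 0) ∧
    (p + q * (1 - p) ≠ 0 →
      (p + q * (1 - p) + 0 ≠ 0 ∧ p + q * 0 + (1 - p) ≠ 0 ∧
        (0 : ℂ) = 0 / (p + q * (1 - p) + 0) ∧
        (1 - p : ℂ) = (1 - p) / (p + q * 0 + (1 - p))) ∧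
      (∀ w : ℕ → ℂ, (∀ n : ℕ, w n = if Even n then 0 else 1 - p) →
        (∀ n : ℕ, p + q * w (n + 1) + w n ≠ 0 ∧
          w (n + 2) = w n / (p + q * w (n + 1) + w n)) ∧ w 0 ≠ w 1)) := by
  constructor
  · intro φ ψ hne h1 h2 e1 e2
    rw [eq_div_iff h1] at e1
    rw [eq_div_iff h2] at e2
    by_cases hφ : φ = 0
    · subst hφ
      have hψ : ψ ≠ 0 := fun h => hne h.symm
      have h3 : p + q * 0 + ψ = 1 := mul_left_cancel₀ hψ (by rw [e2, mul_one])
      have h4 : ψ = 1 - p := by linear_combination h3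
      refine ⟨Or.inl ⟨rfl, h4⟩, ?_⟩
      rw [← h4]
      simpa using h1
    · have h3 : p + q * ψ + φ = 1 := mul_left_cancel₀ hφ (by rw [e1, mul_one])
      by_cases hψ : ψ = 0
      · subst hψ
        have h4 : φ = 1 - p := by linear_combination h3
        refine ⟨Or.inr ⟨h4, rfl⟩, ?_⟩
        rw [← h4]
        simpa using h2
      · exfalso
        have h4 : p + q * φ + ψ = 1 := mul_left_cancel₀ hψ (by rw [e2, mul_one])
        have h5 : (q - 1) * (φ - ψ) = 0 := by linear_combination h4 - h3
        rcases mul_eq_zero.mp h5 with h | h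
        · exact hq (sub_eq_zero.mp h)
        · exact hne (sub_eq_zero.mp h)
  · intro h
    have h1 : p + q * 0 + (1 - p) = 1 := by ring
    refine ⟨⟨by simpa using h, by rw [h1]; exact one_ne_zero, by simp,
      by rw [h1, div_one]⟩, ?_⟩
    intro w hw
    refine ⟨?_, ?_⟩
    · intro n
      have hs : w (n + 2) = w n := by
        rw [hw, hw n]
        simp [Nat.even_add]
      rw [hs]
      by_cases hn : Even n
      · have ha : w n = 0 := by rw [hw, if_pos hn]
        have hb : w (n + 1) = 1 - p := by
          rw [hw, if_neg (by simpa [Nat.even_add_one] using hn)]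
        rw [ha, hb]
        exact ⟨by simpa using h, by simp⟩
      · have ha : w n = 1 - p := by rw [hw, if_neg hn]
        have hb : w (n + 1) = 0 := by
          rw [hw, if_pos (by simpa [Nat.even_add_one] using hn)]
        rw [ha, hb, h1]
        exact ⟨one_ne_zero, by rw [div_one]⟩
    · rw [hw 0, hw 1, if_pos (by decide), if_neg (by decide)]
      exact fun h => hp (sub_eq_zero.mp h.symm).symm
end

section
/- Let p, q ∈ ℂ with p ≠ 1 and c := p + q(1−p) ≠ 0, and let T : ℂ² → ℂ² be the (partially defined) map T(u, v) = (v, u/(p + q v + u)). Then (0, 1−p) is a fixed point of T², and the derivative (Jacobian matrix) of T² at (0, 1−p) is the lower-triangular matrix with diagonal entries 1/c and p and lower-left entry −q(1−p)/c; hence its eigenvalues are 1/(p + q(1−p)) and p, and both eigenvalues lie in the open unit disk if and only if |p + q(1−p)| > 1 and |p| < 1. -/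
/-- for `p ≠ 1` and `c := p + q(1-p) ≠ 0`, with
`T(u,v) = (v, u/(p + q v + u))` (Eq.(8) as a planar map), the point `(0, 1-p)` is a
fixed point of `T²`, the derivative of `T²` there is the lower-triangular linear map
with matrix `[[1/c, 0], [-q(1-p)/c, p]]`, its eigenvalues are exactly `1/c` and `p`,
and both lie in the open unit disk iff `|p + q(1-p)| > 1` and `|p| < 1`. -/
theorem eq8_periodic_point_jacobian (p q : ℂ) (hp : p ≠ 1)
    (hc : p + q * (1 - p) ≠ 0) :
    let c : ℂ := p + q * (1 - p)
    let T : ℂ × ℂ → ℂ × ℂ := fun x => (x.2, x.1 / (p + q * x.2 + x.1))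
    let L : ℂ × ℂ →L[ℂ] ℂ × ℂ :=
      ((1 / c) • ContinuousLinearMap.fst ℂ ℂ ℂ).prod
        ((-q * (1 - p) / c) • ContinuousLinearMap.fst ℂ ℂ ℂ +
          p • ContinuousLinearMap.snd ℂ ℂ ℂ)
    T (T (0, 1 - p)) = (0, 1 - p) ∧
    HasFDerivAt (T ∘ T) L (0, 1 - p) ∧
    (∀ μ : ℂ, (∃ x : ℂ × ℂ, x ≠ 0 ∧ L x = μ • x) ↔ μ = 1 / c ∨ μ = p) ∧
    ((∀ μ : ℂ, (μ = 1 / c ∨ μ = p) → ‖μ‖ < 1) ↔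
      (1 < ‖p + q * (1 - p)‖ ∧ ‖p‖ < 1)) := by
  intro c T L
  have hc' : c ≠ 0 := hc
  have hT0 : T (0, 1 - p) = (1 - p, 0) := by simp [T]
  have hT1 : T (1 - p, 0) = (0, 1 - p) := by simp [T]
  have hT : ∀ x : ℂ × ℂ, ∀ d : ℂ, p + q * x.2 + x.1 = d → d ≠ 0 →
      HasFDerivAt T ((ContinuousLinearMap.snd ℂ ℂ ℂ).prod
        ((1 / d - x.1 / d ^ 2) • ContinuousLinearMap.fst ℂ ℂ ℂ +
          (-(x.1 * q) / d ^ 2) • ContinuousLinearMap.snd ℂ ℂ ℂ)) x := by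
    intro x d hd hd0
    have h1 : HasFDerivAt (fun x : ℂ × ℂ => x.1) (ContinuousLinearMap.fst ℂ ℂ ℂ) x :=
      hasFDerivAt_fst
    have h2 : HasFDerivAt (fun x : ℂ × ℂ => x.2) (ContinuousLinearMap.snd ℂ ℂ ℂ) x :=
      hasFDerivAt_snd
    have h3 := ((h2.const_mul q).const_add p).add h1
    have h4 : HasDerivAt (fun y : ℂ => y⁻¹) (-(d ^ 2)⁻¹) (p + q * x.2 + x.1) := by
      rw [hd]; exact hasDerivAt_inv hd0
    have h5 := h1.mul (h4.comp_hasFDerivAt x h3)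
    refine h2.prodMk ?_
    have h6 : HasFDerivAt (fun x : ℂ × ℂ => x.1 / (p + q * x.2 + x.1)) _ x := h5
    refine h6.congr_fderiv ?_
    ext <;> simp [hd] <;> field_simp <;> ring
  refine ⟨by rw [hT0, hT1], ?_, ?_, ?_⟩
  · have h1 := hT (0, 1 - p) c (by simp [c]) hc'
    have h2 := hT (1 - p, 0) 1 (by simp) one_ne_zero
    rw [← hT0] at h2
    refine (h2.comp (0, 1 - p) h1).congr_fderiv ?_
    ext <;> simp [L, hT0] <;> field_simp
  · have hL : ∀ x : ℂ × ℂ, L x = (1 / c * x.1, -q * (1 - p) / c * x.1 + p * x.2) := by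
      intro x; simp [L]
    intro μ
    constructor
    · rintro ⟨⟨x, y⟩, hx, h⟩
      rw [hL] at h
      simp only [Prod.smul_mk, smul_eq_mul, Prod.mk.injEq] at h
      obtain ⟨ha, hb⟩ := h
      by_cases hx0 : x = 0
      · right
        subst hx0
        have hy : y ≠ 0 := by
          rintro rfl
          exact hx rfl
        have : p * y = μ * y := by simpa using hb
        exact (mul_right_cancel₀ hy this).symm
      · left
        exact (mul_right_cancel₀ hx0 ha).symm
    · have hpe : ∃ x : ℂ × ℂ, x ≠ 0 ∧ L x = p • x :=
        ⟨(0, 1), by simp, by rw [hL]; simp⟩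
      rintro (rfl | rfl)
      · by_cases h : 1 / c = p
        · rw [h]; exact hpe
        · refine ⟨(1 / c - p, -q * (1 - p) / c), ?_, ?_⟩
          · intro h0
            exact h (sub_eq_zero.mp (Prod.mk.inj h0).1)
          · rw [hL]
            simp only [Prod.smul_mk, smul_eq_mul, Prod.mk.injEq, true_and]
            ring
      · exact hpe
  · have hn : 0 < ‖c‖ := norm_pos_iff.mpr hc'
    have key : ‖1 / c‖ < 1 ↔ 1 < ‖c‖ := by
      rw [norm_div, norm_one, div_lt_one hn]
    constructor
    · intro h
      exact ⟨key.mp (h _ (Or.inl rfl)), h _ (Or.inr rfl)⟩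
    · rintro ⟨h1, h2⟩ μ (rfl | rfl)
      · exact key.mpr h1
      · exact h2
end
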